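/- Let u be a nondegenerate Lucas sequence whose discriminant Δ = a₁² + 4a₂ is not equal to 1. Then there exist positive constants c₁ and x₀ (depending on the sequence) such that for all x > x₀, the number of positive integers n ≤ x with n ∣ u_n is greater than exp(c₁·(log log x)²). -/

import Mathlib

/-!
A discriminant `Δ ≠ 1` is also different from `-1` (it is `0` or `1` mod `4`), so it has a prime
factor `p`, and then `p ^ j ∣ u (p ^ j)` for all `j`. The set of `n` with `n ∣ u n` is closed under
`n ↦ q * n` whenever `q ∣ u n`, because `u (q * n) / u n ≡ q * u (n + 1) ^ (q - 1)` modulo `u n`.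
Hence every `p ^ k * ∏ Q i ^ e i` with the `Q i` dividing `u (p ^ k)` is counted.

To have enough primes `Q i` it suffices that, for large `j`, some prime divides `u (p ^ (j + 2))`
but not `u (p ^ j)` (`IsLucas.exists_new_prime`). If there were none, the congruence above
would force both quotients `u (p ^ (j + 1)) / u (p ^ j)` and `u (p ^ (j + 2)) / u (p ^ (j + 1))` to
be at most `p` in absolute value. With roots `|β| ≤ |α|`, `|α| > 1`, the smallness of the first one
makes `(β / α) ^ p ^ (j + 1)` so close to `1` that the second is about `p * |α| ^ ((p - 1) p ^ (j + 1))`,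
a contradiction (`not_two_small_quotients`). No lower bound for `|u n|` by linear forms in
logarithms is needed.

Write `Q i` for a prime dividing `u (p ^ (J + 2 i + 2))` but not `u (p ^ (J + 2 i))`; the `Q i` are
distinct and `Q i ≤ A ^ p ^ (J + 2 i + 2)`. With `k = J + 2 K`, `i < K` and exponents
`e i < p ^ (2 (K - i))`, this gives `p ^ (K (K + 1)) ≥ 2 ^ K ^ 2` admissible integers, all of size at
most `exp (C * (p ^ 3) ^ K)` (`IsLucas.two_pow_le_countDiv`, `size_bound`). Taking `K` of order
`log log x` gives the theorem.
-/

open Classical in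
/-- The number of positive integers `n ≤ x` with `n ∣ u n`. -/
noncomputable def countDiv (u : ℕ → ℤ) (x : ℝ) : ℕ :=
  ((Finset.Icc 1 ⌊x⌋₊).filter fun n : ℕ => (n : ℤ) ∣ u n).card

/-! ### Divisibility in Lucas sequences -/

/-- `u` is the Lucas sequence with parameters `a₁`, `a₂`; coprimality and nondegeneracy are not
part of this predicate. -/
structure IsLucas (a₁ a₂ : ℤ) (u : ℕ → ℤ) : Prop where
  zero : u 0 = 0
  one : u 1 = 1
  step : ∀ n : ℕ, u (n + 2) = a₁ * u (n + 1) + a₂ * u n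

namespace IsLucas

variable {a₁ a₂ : ℤ} {u : ℕ → ℤ}

lemma add_formula (h : IsLucas a₁ a₂ u) (m n : ℕ) :
    u (m + n + 1) = u (m + 1) * u (n + 1) + a₂ * u m * u n := by
  induction n using Nat.twoStepInduction with
  | zero => simp [h.zero, h.one]
  | one =>
    have h2 := h.step 0
    have h3 := h.step m
    simp only [zero_add, h.zero, h.one] at h2 ⊢
    rw [show m + 1 + 1 = m + 2 from rfl, h3, show 1 + 1 = 0 + 2 from rfl, zero_add, h2]
    ring
  | more n ih1 ih2 =>
    have e1 := h.step (m + n + 1)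
    have e2 := h.step (n + 1)
    have e3 := h.step n
    rw [show m + (n + 2) + 1 = m + n + 1 + 2 by ring, e1,
      show m + n + 1 + 1 = m + (n + 1) + 1 by ring, ih1, ih2,
      show n + 2 + 1 = n + 1 + 2 by ring, e2, show n + 1 + 1 = n + 2 by ring, e3]
    ring

lemma coprime_succ (h : IsLucas a₁ a₂ u) (hcop : IsCoprime a₁ a₂) (n : ℕ) :
    IsCoprime (u n) (u (n + 1)) := by
  have key : IsCoprime (u n) (u (n + 1)) ∧ IsCoprime (u (n + 1)) a₂ := by
    induction n with
    | zero => simp [h.zero, h.one, isCoprime_one_left, isCoprime_one_right]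
    | succ n ih =>
      obtain ⟨i1, i2⟩ := ih
      rw [show n + 1 + 1 = n + 2 from rfl, h.step n]
      constructor
      · have : IsCoprime (u (n + 1)) (a₂ * u n) := i2.mul_right i1.symm
        simpa only [add_comm (a₂ * u n), mul_comm (u (n + 1)) a₁] using this.add_mul_left_right a₁
      · have : IsCoprime (a₁ * u (n + 1)) a₂ := hcop.mul_left i2
        exact this.add_mul_left_left (u n)
  exact key.1

lemma succ_mul_modEq (h : IsLucas a₁ a₂ u) (m k : ℕ) :
    u m ∣ u (k * m) ∧ u (k * m + 1) ≡ u (m + 1) ^ k [ZMOD u m] := by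
  rcases m with _ | m
  · simp [h.zero, h.one]
  induction k with
  | zero => simp [h.zero, h.one]
  | succ k ih =>
    obtain ⟨i1, i2⟩ := ih
    constructor
    · have := h.add_formula (k * (m + 1)) m
      rw [show (k + 1) * (m + 1) = k * (m + 1) + m + 1 by ring, this]
      exact dvd_add (dvd_mul_left _ _) (Dvd.dvd.mul_right (Dvd.dvd.mul_left i1 _) _)
    · have := h.add_formula (k * (m + 1)) (m + 1)
      rw [show (k + 1) * (m + 1) = k * (m + 1) + (m + 1) by ring, this, pow_succ]
      have e : a₂ * u (k * (m + 1)) * u (m + 1) ≡ 0 [ZMOD u (m + 1)] :=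
        (Int.modEq_zero_iff_dvd).2 (dvd_mul_left _ _)
      simpa using (i2.mul_right (u (m + 1 + 1))).add e

/-- The quotient `w = u ((k + 1) * m) / u m` satisfies `w ≡ (k + 1) * u (m + 1) ^ k` modulo `u m`.
All divisibility properties used below come from this congruence. -/
lemma exists_quot (h : IsLucas a₁ a₂ u) {m : ℕ} (hm : 0 < m) (k : ℕ) :
    ∃ w : ℤ, u ((k + 1) * m) = u m * w ∧ w ≡ (k + 1) * u (m + 1) ^ k [ZMOD u m] := by
  obtain ⟨m, rfl⟩ : ∃ l, m = l + 1 := ⟨m - 1, by omega⟩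
  induction k with
  | zero => exact ⟨1, by simp, by simp⟩
  | succ k ih =>
    obtain ⟨w, hw, hw'⟩ := ih
    refine ⟨u ((k + 1) * (m + 1) + 1) + a₂ * u m * w, ?_, ?_⟩
    · have := h.add_formula ((k + 1) * (m + 1)) m
      rw [show (k + 1 + 1) * (m + 1) = (k + 1) * (m + 1) + m + 1 by ring, this, hw]
      ring
    · have e1 := (h.succ_mul_modEq (m + 1) (k + 1)).2
      have e2 : a₂ * u m ≡ u (m + 1 + 1) [ZMOD u (m + 1)] := by
        rw [show m + 1 + 1 = m + 2 from rfl, h.step m]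
        exact (Int.modEq_iff_dvd).2 ⟨a₁, by ring⟩
      have e3 := e1.add (e2.mul hw')
      have : u (m + 1 + 1) ^ (k + 1) + u (m + 1 + 1) * ((k + 1) * u (m + 1 + 1) ^ k)
        = ((k + 1 : ℕ) + 1 : ℤ) * u (m + 1 + 1) ^ (k + 1) := by
        push_cast; ring
      rwa [this] at e3

lemma dvd_of_dvd (h : IsLucas a₁ a₂ u) {m n : ℕ} (hmn : m ∣ n) : u m ∣ u n := by
  obtain ⟨k, rfl⟩ := hmn
  rw [mul_comm]
  exact (h.succ_mul_modEq m k).1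

lemma mul_dvd (h : IsLucas a₁ a₂ u) {n q : ℕ} (hn : 0 < n) (hq : (q : ℤ) ∣ u n) (hq0 : q ≠ 0) :
    u n * q ∣ u (q * n) := by
  obtain ⟨k, rfl⟩ := Nat.exists_eq_succ_of_ne_zero hq0
  obtain ⟨w, hw, hw'⟩ := h.exists_quot hn k
  rw [Nat.succ_eq_add_one, hw]
  refine mul_dvd_mul_left _ ?_
  have e := hw'.of_dvd (by simpa using hq)
  have : (((k + 1 : ℕ) : ℤ)) ∣ (k + 1) * u (n + 1) ^ k := by
    push_cast; exact dvd_mul_right _ _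
  exact e.dvd_iff.2 (by exact_mod_cast this)

/-- The set of `n` with `n ∣ u n` is closed under multiplication by divisors of `u n`. -/
lemma mul_self_dvd (h : IsLucas a₁ a₂ u) {n q : ℕ} (hn : 0 < n) (hnu : (n : ℤ) ∣ u n)
    (hq0 : q ≠ 0) (hq : (q : ℤ) ∣ u n) : ((q * n : ℕ) : ℤ) ∣ u (q * n) := by
  refine dvd_trans ?_ (h.mul_dvd hn hq hq0)
  push_cast
  rw [mul_comm]
  exact mul_dvd_mul_right hnu _

/-- Modulo the discriminant the two roots both become `a₁ / 2`, so `u (n + 1)` becomes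
`(n + 1) * (a₁ / 2) ^ n`. -/
lemma two_pow_mul (h : IsLucas a₁ a₂ u) (n : ℕ) :
    2 ^ n * u (n + 1) ≡ (n + 1) * a₁ ^ n [ZMOD a₁ ^ 2 + 4 * a₂] := by
  induction n using Nat.twoStepInduction with
  | zero => simp [h.one]
  | one => 
    have := h.step 0
    simp [h.one, h.zero] at this
    simp [this]
  | more n ih1 ih2 =>
    have e := h.step (n + 1)
    obtain ⟨c, hc⟩ := (Int.modEq_iff_dvd).1 ih1
    obtain ⟨d, hd⟩ := (Int.modEq_iff_dvd).1 ih2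
    refine (Int.modEq_iff_dvd).2 ⟨2 * a₁ * d + 4 * a₂ * c + (n + 1) * a₁ ^ n * (-1), ?_⟩
    rw [show n + 2 + 1 = n + 1 + 2 by ring, e]
    push_cast at hd ⊢
    have hc' : 2 ^ n * u (n + 1) = (n + 1) * a₁ ^ n - (a₁ ^ 2 + 4 * a₂) * c := by linarith
    have hd' : 2 ^ (n + 1) * u (n + 1 + 1) =
      (n + 1 + 1) * a₁ ^ (n + 1) - (a₁ ^ 2 + 4 * a₂) * d := by linarith
    have : (2 : ℤ) ^ (n + 2) * (a₁ * u (n + 1 + 1) + a₂ * u (n + 1)) =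
      2 * a₁ * (2 ^ (n + 1) * u (n + 1 + 1)) + 4 * a₂ * (2 ^ n * u (n + 1)) := by ring
    rw [this, hc', hd']
    ring

lemma prime_dvd (h : IsLucas a₁ a₂ u) {p : ℕ} (hp : p.Prime)
    (hpΔ : (p : ℤ) ∣ a₁ ^ 2 + 4 * a₂) : (p : ℤ) ∣ u p := by
  have hpi : Prime (p : ℤ) := Nat.prime_iff_prime_int.1 hp
  rcases hp.eq_two_or_odd' with rfl | hodd
  · have := h.step 0
    simp [h.one, h.zero] at this
    rw [this]
    have h2 : ((2 : ℕ) : ℤ) ∣ a₁ ^ 2 := by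
      have : ((2 : ℕ) : ℤ) ∣ 4 * a₂ := ⟨2 * a₂, by push_cast; ring⟩
      exact (dvd_add_left this).1 hpΔ
    exact hpi.dvd_of_dvd_pow h2
  · have e := (h.two_pow_mul (p - 1)).of_dvd hpΔ
    have hp1 : p - 1 + 1 = p := by have := hp.pos; omega
    have hc : ((p - 1 : ℕ) : ℤ) + 1 = p := by exact_mod_cast hp1
    rw [hp1, hc] at e
    have : (p : ℤ) ∣ 2 ^ (p - 1) * u p := e.dvd_iff.2 (dvd_mul_right _ _)
    rcases hpi.dvd_or_dvd this with h2 | h2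
    · have h3 : p ∣ 2 := by exact_mod_cast hpi.dvd_of_dvd_pow h2
      have := (Nat.prime_dvd_prime_iff_eq hp Nat.prime_two).1 h3
      subst this
      exact absurd hodd (by decide)
    · exact h2

lemma prime_pow_dvd (h : IsLucas a₁ a₂ u) {p : ℕ} (hp : p.Prime)
    (hpΔ : (p : ℤ) ∣ a₁ ^ 2 + 4 * a₂) (j : ℕ) : ((p ^ j : ℕ) : ℤ) ∣ u (p ^ j) := by
  induction j with
  | zero => simp
  | succ j ih =>
    rcases j with _ | j
    · simpa using h.prime_dvd hp hpΔ
    · have hd : (p : ℤ) ∣ u (p ^ (j + 1)) :=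
        (h.prime_dvd hp hpΔ).trans (h.dvd_of_dvd (dvd_pow_self p (by omega)))
      have := h.mul_self_dvd (pow_pos hp.pos _) ih hp.ne_zero hd
      rwa [pow_succ' p (j + 1)]

/-- If `p ^ 2 ∣ u m` and `u (p * m)` has no prime factor besides those of `u m`, then the quotient
`u (p * m) / u m` is `1` or `p` up to sign: its only possible prime factor is `p`, since it is
congruent to `p * u (m + 1) ^ (p - 1)` modulo `u m`, and it is not divisible by `p ^ 2`. -/
lemma natAbs_le_of_no_new_prime (h : IsLucas a₁ a₂ u) (hcop : IsCoprime a₁ a₂) {p m : ℕ}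
    (hp : p.Prime) (hm : 0 < m) (hpm : ((p ^ 2 : ℕ) : ℤ) ∣ u m) (hne : u (p * m) ≠ 0)
    (hold : ∀ q : ℕ, q.Prime → (q : ℤ) ∣ u (p * m) → (q : ℤ) ∣ u m) :
    (u (p * m)).natAbs ≤ p * (u m).natAbs := by
  have hp1 : p - 1 + 1 = p := by have := hp.pos; omega
  have hc : ((p - 1 : ℕ) : ℤ) + 1 = p := by exact_mod_cast hp1
  obtain ⟨w, hw, hw'⟩ := h.exists_quot hm (p - 1)
  rw [hp1] at hw
  rw [hc] at hw'
  have hw0 : w ≠ 0 := by rintro rfl; simp [hw] at hne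
  have hcu := h.coprime_succ hcop m
  -- a prime dividing `w` divides `p * u (m + 1) ^ (p - 1)`, and is coprime to `u (m + 1)`
  have huniq : ∀ {q : ℕ}, q.Prime → q ∣ w.natAbs → q = p := by
    intro q hq hqw
    have hqi : Prime (q : ℤ) := Nat.prime_iff_prime_int.1 hq
    have hqw' : (q : ℤ) ∣ w := Int.natCast_dvd.2 hqw
    have hqu : (q : ℤ) ∣ u m := hold q hq (hw ▸ Dvd.dvd.mul_left hqw' _)
    have := ((hw'.of_dvd hqu).dvd_iff).1 hqw'
    rcases hqi.dvd_or_dvd this with h2 | h2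
    · exact (Nat.prime_dvd_prime_iff_eq hq hp).1 (by exact_mod_cast h2)
    · exact absurd (hcu.isUnit_of_dvd' hqu (hqi.dvd_of_dvd_pow h2)) hqi.not_isUnit
  have hpow := Nat.eq_prime_pow_of_unique_prime_dvd (Int.natAbs_ne_zero.2 hw0) huniq
  have hsq : ¬ p ^ 2 ∣ w.natAbs := by
    intro hd
    have hd' : ((p ^ 2 : ℕ) : ℤ) ∣ w := Int.natCast_dvd.2 hd
    have := ((hw'.of_dvd hpm).dvd_iff).1 hd'
    have hpi : Prime (p : ℤ) := Nat.prime_iff_prime_int.1 hp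
    push_cast at this
    rw [pow_two] at this
    have h3 := hpi.dvd_of_dvd_pow ((mul_dvd_mul_iff_left hpi.ne_zero).1 this)
    have hpu : (p : ℤ) ∣ u m := dvd_trans (by push_cast; exact dvd_pow_self _ two_ne_zero) hpm
    exact hpi.not_isUnit (hcu.isUnit_of_dvd' hpu h3)
  have hlen : w.natAbs.primeFactorsList.length ≤ 1 := by
    by_contra! hlt
    exact hsq (hpow ▸ pow_dvd_pow p hlt)
  have : w.natAbs ≤ p := by
    rw [hpow]
    calc p ^ _ ≤ p ^ 1 := Nat.pow_le_pow_right hp.pos hlen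
      _ = p := pow_one p
  rw [hw, Int.natAbs_mul, mul_comm]
  exact Nat.mul_le_mul_right _ this

lemma natAbs_le (h : IsLucas a₁ a₂ u) (n : ℕ) :
    (u n).natAbs ≤ (a₁.natAbs + a₂.natAbs + 1) ^ n := by
  induction n using Nat.twoStepInduction with
  | zero => simp [h.zero]
  | one => simp [h.one]
  | more n ih1 ih2 =>
    rw [h.step]
    set A := a₁.natAbs + a₂.natAbs + 1 with hA
    calc (a₁ * u (n + 1) + a₂ * u n).natAbs
        ≤ a₁.natAbs * (u (n + 1)).natAbs + a₂.natAbs * (u n).natAbs := by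
          refine (Int.natAbs_add_le _ _).trans ?_
          rw [Int.natAbs_mul, Int.natAbs_mul]
      _ ≤ a₁.natAbs * A ^ (n + 1) + a₂.natAbs * A ^ (n + 1) := by
          gcongr
          exact ih1.trans (Nat.pow_le_pow_right (by omega) (by omega))
      _ = (a₁.natAbs + a₂.natAbs) * A ^ (n + 1) := by ring
      _ ≤ A * A ^ (n + 1) := by gcongr; omega
      _ = A ^ (n + 2) := by ring

lemma binet (h : IsLucas a₁ a₂ u) {α β : ℂ} (hα : α ^ 2 - (a₁ : ℂ) * α - (a₂ : ℂ) = 0)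
    (hβ : β ^ 2 - (a₁ : ℂ) * β - (a₂ : ℂ) = 0) (n : ℕ) :
    (u n : ℂ) * (α - β) = α ^ n - β ^ n := by
  induction n using Nat.twoStepInduction with
  | zero => simp [h.zero]
  | one => simp [h.one]
  | more n ih1 ih2 =>
    rw [h.step]
    push_cast
    linear_combination a₁ * ih2 + a₂ * ih1 - α ^ n * hα + β ^ n * hβ

end IsLucas

/-! ### The roots of the characteristic polynomial -/

/-- If `(A ^ p - B ^ p) / (A - B)` is small compared with `A`, then `y = (B / A) ^ p` is so close to
`1` that `1 + y + ⋯ + y ^ (p - 1)` is close to `p`, and `(A ^ (p ^ 2) - B ^ (p ^ 2)) / (A ^ p - B ^ p)`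
is large. -/
lemma not_two_small_quotients {A B : ℂ} {p : ℕ} (hp : 2 ≤ p) (hBA : ‖B‖ ≤ ‖A‖)
    (hA : 1 + 2 * (p : ℝ) ^ 2 < ‖A‖) (hne : A ^ p ≠ B ^ p)
    (h1 : ‖A ^ p - B ^ p‖ ≤ p * ‖A - B‖)
    (h2 : ‖(A ^ p) ^ p - (B ^ p) ^ p‖ ≤ p * ‖A ^ p - B ^ p‖) : False := by
  have hp0 : (0 : ℝ) < p := by positivity
  have hA1 : 1 < ‖A‖ := by nlinarith [sq_nonneg (p : ℝ)]
  have hApos : 0 < ‖A‖ := by linarith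
  have hA0 : A ≠ 0 := norm_pos_iff.1 hApos
  obtain ⟨y, hy⟩ : ∃ y : ℂ, y = (B / A) ^ p := ⟨_, rfl⟩
  have hyB : B ^ p = A ^ p * y := by rw [hy, div_pow]; field_simp
  have hy1 : ‖y‖ ≤ 1 := by
    rw [hy, norm_pow, norm_div]
    exact pow_le_one₀ (by positivity) ((div_le_one hApos).2 hBA)
  have hyne : 0 < ‖1 - y‖ := by
    rw [norm_pos_iff, sub_ne_zero]
    rintro rfl
    simp at hyB
    exact hne hyB.symm
  have hAp : ‖A‖ ^ 2 ≤ ‖A‖ ^ p := pow_le_pow_right₀ hA1.le hp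
  have e1 : ‖A ^ p - B ^ p‖ = ‖A‖ ^ p * ‖1 - y‖ := by
    rw [hyB, ← norm_pow, ← norm_mul]; congr 1; ring
  have e2 : ‖(A ^ p) ^ p - (B ^ p) ^ p‖ =
      (‖A‖ ^ p) ^ p * (‖1 - y‖ * ‖∑ i ∈ Finset.range p, y ^ i‖) := by
    rw [hyB, ← norm_pow, ← norm_pow, ← norm_mul, ← norm_mul]; congr 1
    rw [mul_neg_geom_sum]; ring
  rw [e1] at h1
  rw [e1, e2] at h2
  have h3 : ‖A‖ * ‖1 - y‖ ≤ 2 * p := by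
    have : ‖A - B‖ ≤ 2 * ‖A‖ := (norm_sub_le _ _).trans (by linarith)
    have h4 : ‖A‖ * (‖A‖ * ‖1 - y‖) ≤ ‖A‖ * (2 * p) := by
      calc ‖A‖ * (‖A‖ * ‖1 - y‖) = ‖A‖ ^ 2 * ‖1 - y‖ := by ring
        _ ≤ ‖A‖ ^ p * ‖1 - y‖ := by gcongr
        _ ≤ p * ‖A - B‖ := h1
        _ ≤ p * (2 * ‖A‖) := by gcongr
        _ = ‖A‖ * (2 * p) := by ring
    exact le_of_mul_le_mul_left h4 hApos
  have h5 : ‖A‖ * ‖∑ i ∈ Finset.range p, y ^ i‖ ≤ p := by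
    set S := ‖∑ i ∈ Finset.range p, y ^ i‖
    have hAp' : ‖A‖ * ‖A‖ ^ p ≤ (‖A‖ ^ p) ^ p := by
      have hle : ‖A‖ ≤ ‖A‖ ^ p := by nlinarith
      calc ‖A‖ * ‖A‖ ^ p ≤ ‖A‖ ^ p * ‖A‖ ^ p := by gcongr
        _ = (‖A‖ ^ p) ^ 2 := by ring
        _ ≤ (‖A‖ ^ p) ^ p := pow_le_pow_right₀ (hA1.le.trans hle) hp
    have : (‖A‖ ^ p * ‖1 - y‖) * (‖A‖ * S) ≤ (‖A‖ ^ p * ‖1 - y‖) * p := by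
      calc (‖A‖ ^ p * ‖1 - y‖) * (‖A‖ * S) = (‖A‖ * ‖A‖ ^ p) * (‖1 - y‖ * S) := by ring
        _ ≤ (‖A‖ ^ p) ^ p * (‖1 - y‖ * S) := by gcongr
        _ ≤ _ := h2
        _ = _ := by ring
    exact le_of_mul_le_mul_left this (by positivity)
  have h6 : (p : ℝ) ≤ ‖∑ i ∈ Finset.range p, y ^ i‖ + p * (p * ‖1 - y‖) := by
    have hterm : ∀ i ∈ Finset.range p, ‖1 - y ^ i‖ ≤ p * ‖1 - y‖ := by
      intro i hi
      rw [← mul_neg_geom_sum, norm_mul, mul_comm]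
      gcongr
      calc ‖∑ k ∈ Finset.range i, y ^ k‖ ≤ ∑ k ∈ Finset.range i, (1 : ℝ) := by
            refine norm_sum_le_of_le _ fun k _ => ?_
            rw [norm_pow]; exact pow_le_one₀ (norm_nonneg _) hy1
        _ = i := by simp
        _ ≤ p := by exact_mod_cast (Finset.mem_range.1 hi).le
    have hs : (p : ℂ) = ∑ i ∈ Finset.range p, y ^ i + ∑ i ∈ Finset.range p, (1 - y ^ i) := by
      rw [← Finset.sum_add_distrib]; simp
    calc (p : ℝ) = ‖(p : ℂ)‖ := by simp
      _ ≤ ‖∑ i ∈ Finset.range p, y ^ i‖ + ‖∑ i ∈ Finset.range p, (1 - y ^ i)‖ := by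
          conv_lhs => rw [hs]
          exact norm_add_le _ _
      _ ≤ ‖∑ i ∈ Finset.range p, y ^ i‖ + ∑ i ∈ Finset.range p, (p * ‖1 - y‖) := by
          gcongr; exact norm_sum_le_of_le _ hterm
      _ = _ := by simp
  have h7 : ‖A‖ * p ≤ p + p * (p * (2 * p)) := by
    calc ‖A‖ * p ≤ ‖A‖ * (‖∑ i ∈ Finset.range p, y ^ i‖ + p * (p * ‖1 - y‖)) := by gcongr
      _ = ‖A‖ * ‖∑ i ∈ Finset.range p, y ^ i‖ + p * (p * (‖A‖ * ‖1 - y‖)) := by ring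
      _ ≤ _ := by gcongr
  nlinarith

/-- The roots, ordered by modulus. The larger one has modulus greater than `1`: otherwise both lie
on the unit circle, and then their quotient is a root of unity. -/
lemma exists_roots {a₁ a₂ : ℤ} (ha₂ : a₂ ≠ 0) (hΔ : a₁ ^ 2 + 4 * a₂ ≠ 0)
    (hnd : ∀ α β : ℂ, α ^ 2 - (a₁ : ℂ) * α - (a₂ : ℂ) = 0 →
      β ^ 2 - (a₁ : ℂ) * β - (a₂ : ℂ) = 0 → α ≠ β →
      ∀ m : ℕ, 0 < m → (α / β) ^ m ≠ 1) :
    ∃ α β : ℂ, α ^ 2 - (a₁ : ℂ) * α - (a₂ : ℂ) = 0 ∧ β ^ 2 - (a₁ : ℂ) * β - (a₂ : ℂ) = 0 ∧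
      α ≠ β ∧ β ≠ 0 ∧ ‖β‖ ≤ ‖α‖ ∧ 1 < ‖α‖ := by
  have ha₂' : (a₂ : ℂ) ≠ 0 := by exact_mod_cast ha₂
  have hV : ∃ α β : ℂ, α + β = a₁ ∧ α * β = -a₂ ∧ α ≠ β ∧ ‖β‖ ≤ ‖α‖ := by
    obtain ⟨s, hs⟩ := IsAlgClosed.exists_pow_nat_eq ((a₁ : ℂ) ^ 2 + 4 * a₂) (n := 2) two_pos
    have hs0 : s ≠ 0 := by
      rintro rfl
      apply hΔ
      have : (a₁ : ℂ) ^ 2 + 4 * a₂ = 0 := by rw [← hs]; simp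
      exact_mod_cast this
    rcases le_total ‖(a₁ - s) / 2‖ ‖(a₁ + s) / 2‖ with hle | hle
    · refine ⟨(a₁ + s) / 2, (a₁ - s) / 2, by ring, by linear_combination -hs / 4, ?_, hle⟩
      intro he; apply hs0; linear_combination he
    · refine ⟨(a₁ - s) / 2, (a₁ + s) / 2, by ring, by linear_combination -hs / 4, ?_, hle⟩
      intro he; apply hs0; linear_combination -he
  obtain ⟨α, β, hsum, hprod, hne, hle⟩ := hV
  have hα : α ^ 2 - (a₁ : ℂ) * α - (a₂ : ℂ) = 0 := by
    linear_combination α * hsum - hprod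
  have hβ : β ^ 2 - (a₁ : ℂ) * β - (a₂ : ℂ) = 0 := by
    linear_combination β * hsum - hprod
  have hβ0 : β ≠ 0 := by rintro rfl; simp at hprod; exact ha₂ hprod
  have hα0 : α ≠ 0 := by rintro rfl; simp at hprod; exact ha₂ hprod
  refine ⟨α, β, hα, hβ, hne, hβ0, hle, ?_⟩
  by_contra! hα1
  have hnp : ‖α‖ * ‖β‖ = |(a₂ : ℝ)| := by
    rw [← norm_mul, hprod, norm_neg, Complex.norm_intCast]
  have ha1 : (1 : ℝ) ≤ |(a₂ : ℝ)| := by exact_mod_cast Int.one_le_abs ha₂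
  have hβn : ‖β‖ = 1 := by nlinarith [norm_nonneg α, norm_nonneg β]
  have hαn : ‖α‖ = 1 := by nlinarith [norm_nonneg α, norm_nonneg β]
  -- the conjugate of a number of modulus one is its inverse, so `1/α + 1/β = α + β`
  have hca : (starRingEnd ℂ) α * α = 1 := by
    rw [Complex.conj_mul', hαn]; simp
  have hcb : (starRingEnd ℂ) β * β = 1 := by
    rw [Complex.conj_mul', hβn]; simp
  have hcs : (starRingEnd ℂ) α + (starRingEnd ℂ) β = a₁ := by
    rw [← map_add, hsum]; simp
  have hkey : (a₁ : ℂ) * (1 + a₂) = 0 := by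
    linear_combination α * β * hcs - hca * β - hcb * α - hsum + a₁ * hprod
  have hkey' : a₁ * (1 + a₂) = 0 := by exact_mod_cast hkey
  have ha1le : |(a₁ : ℝ)| ≤ 2 := by
    rw [← Complex.norm_intCast, ← hsum]
    exact (norm_add_le _ _).trans (by linarith)
  have ha1le' : |a₁| ≤ 2 := by exact_mod_cast ha1le
  rcases mul_eq_zero.1 hkey' with h0 | h0
  · refine hnd α β hα hβ hne 2 two_pos ?_
    rw [h0] at hsum
    have : α = -β := by linear_combination hsum
    rw [this, neg_div, div_self hβ0]; norm_num
  · have h2 : a₂ = -1 := by omega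
    subst h2
    obtain ⟨hl, hr⟩ := abs_le.1 ha1le'
    have hdiv : ∀ n : ℕ, 0 < n → α ^ n ≠ β ^ n := by
      intro n hn he
      apply hnd α β hα hβ hne n hn
      rw [div_pow, he, div_self (pow_ne_zero _ hβ0)]
    interval_cases a₁
    · simp at hΔ
    · apply hdiv 3 (by norm_num)
      push_cast at hα hβ
      linear_combination (α - 1) * hα - (β - 1) * hβ
    · apply hdiv 2 (by norm_num)
      push_cast at hα hβ
      linear_combination hα - hβ
    · apply hdiv 3 (by norm_num)
      push_cast at hα hβ
      linear_combination (α + 1) * hα - (β + 1) * hβ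
    · simp at hΔ

/-! ### Counting and growth estimates -/

/-- If `f x ≥ 2 ^ K ^ 2` as soon as `x ≥ exp (C * R ^ K)`, then `f` grows at least like
`exp (c * (log log x) ^ 2)`: take `K = ⌊(log log x - log C) / log R⌋`, which is at least
`log log x / (2 * log R)` for large `x`. -/
lemma loglog_bound {f : ℝ → ℕ} {C R : ℝ} (hC : 1 ≤ C) (hR : 1 < R)
    (hf : ∀ (K : ℕ) (x : ℝ), Real.exp (C * R ^ K) ≤ x → 2 ^ (K ^ 2) ≤ f x) :
    ∃ c₁ : ℝ, 0 < c₁ ∧ ∃ x₀ : ℝ, 0 < x₀ ∧ ∀ x : ℝ, x₀ < x →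
      Real.exp (c₁ * Real.log (Real.log x) ^ 2) < (f x : ℝ) := by
  have hlR : 0 < Real.log R := Real.log_pos hR
  have hlC : 0 ≤ Real.log C := Real.log_nonneg hC
  have hl2 : 0 < Real.log 2 := Real.log_pos one_lt_two
  refine ⟨Real.log 2 / (8 * Real.log R ^ 2), by positivity,
    Real.exp (Real.exp (2 * (Real.log C + Real.log R) + 1)), Real.exp_pos _, fun x hx => ?_⟩
  have hx0 : 0 < x := (Real.exp_pos _).trans hx
  have hlx := (Real.lt_log_iff_exp_lt hx0).2 hx
  have hlx0 : 0 < Real.log x := (Real.exp_pos _).trans hlx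
  have hL := (Real.lt_log_iff_exp_lt hlx0).2 hlx
  set L := Real.log (Real.log x) with hLdef
  set K := ⌊(L - Real.log C) / Real.log R⌋₊ with hK
  have hq : 0 ≤ (L - Real.log C) / Real.log R := div_nonneg (by linarith) hlR.le
  have hK1 : (K : ℝ) ≤ (L - Real.log C) / Real.log R := Nat.floor_le hq
  have hK2 : (L - Real.log C) / Real.log R < K + 1 := Nat.lt_floor_add_one _
  rw [le_div_iff₀ hlR] at hK1
  rw [div_lt_iff₀ hlR] at hK2
  have hxK : Real.exp (C * R ^ K) ≤ x := by
    rw [← Real.le_log_iff_exp_le hx0, ← Real.log_le_log_iff (by positivity) hlx0,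
      Real.log_mul (by positivity) (by positivity), Real.log_pow]
    linarith
  have h2 : ((2 : ℝ)) ^ (K ^ 2) ≤ f x := by exact_mod_cast hf K x hxK
  refine lt_of_lt_of_le ?_ h2
  rw [← Real.exp_log (show (0 : ℝ) < 2 ^ (K ^ 2) by positivity), Real.exp_lt_exp, Real.log_pow]
  push_cast
  rw [div_mul_eq_mul_div, div_lt_iff₀ (by positivity)]
  have hLK : L ≤ 2 * (K * Real.log R) := by linarith
  have hL0 : 0 < L := by linarith
  have hsq : L ^ 2 ≤ (2 * (K * Real.log R)) ^ 2 := by gcongr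
  have hsq' : 0 < L ^ 2 := by positivity
  have : L ^ 2 < 8 * (K ^ 2 * Real.log R ^ 2) := by nlinarith
  calc Real.log 2 * L ^ 2 < Real.log 2 * (8 * (K ^ 2 * Real.log R ^ 2)) := by gcongr
    _ = _ := by ring

lemma prod_pow_injective {ι : Type*} [Fintype ι] {Q : ι → ℕ} (hQ : ∀ i, (Q i).Prime)
    (hinj : Function.Injective Q) :
    Function.Injective fun e : ι → ℕ => ∏ i, Q i ^ e i := by
  classical
  have key : ∀ (e : ι → ℕ) (j : ι), (∏ i, Q i ^ e i).factorization (Q j) = e j := by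
    intro e j
    rw [Nat.factorization_prod fun i _ => pow_ne_zero _ (hQ i).ne_zero]
    rw [Finsupp.finsetSum_apply, Finset.sum_eq_single j]
    · simp [(hQ j).factorization_self]
    · intro b _ hb
      rw [(hQ b).factorization_pow, Finsupp.single_eq_of_ne]
      exact fun h => hb (hinj h).symm
    · simp
  intro e e' h
  funext j
  rw [← key e j, ← key e' j]
  exact congrArg (fun n => n.factorization (Q j)) h

lemma sum_two_mul_sub (K : ℕ) : ∑ i : Fin K, 2 * (K - (i : ℕ)) = K * (K + 1) := by
  rw [Fin.sum_univ_eq_sum_range (fun i => 2 * (K - i)) K]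
  induction K with
  | zero => simp
  | succ K ih =>
    rw [Finset.sum_range_succ']
    simp only [Nat.add_sub_add_right, ih]
    simp; ring

/-! ### New primes along powers of `p` -/

lemma IsLucas.ne_zero {a₁ a₂ : ℤ} {u : ℕ → ℤ} (h : IsLucas a₁ a₂ u) {α β : ℂ}
    (hα : α ^ 2 - (a₁ : ℂ) * α - (a₂ : ℂ) = 0) (hβ : β ^ 2 - (a₁ : ℂ) * β - (a₂ : ℂ) = 0)
    (hβ0 : β ≠ 0) (hnd : ∀ m : ℕ, 0 < m → (α / β) ^ m ≠ 1) {n : ℕ} (hn : 0 < n) : u n ≠ 0 := by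
  intro h0
  have hb := h.binet hα hβ n
  rw [h0, Int.cast_zero, zero_mul, eq_comm, sub_eq_zero] at hb
  apply hnd n hn
  rw [div_pow, hb, div_self (pow_ne_zero _ hβ0)]

/-- Two steps up the tower `u (p ^ j)` always produce a new prime factor, once `j` is large. -/
lemma IsLucas.exists_new_prime {a₁ a₂ : ℤ} {u : ℕ → ℤ} (h : IsLucas a₁ a₂ u)
    (hcop : IsCoprime a₁ a₂) {α β : ℂ}
    (hα : α ^ 2 - (a₁ : ℂ) * α - (a₂ : ℂ) = 0) (hβ : β ^ 2 - (a₁ : ℂ) * β - (a₂ : ℂ) = 0)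
    (hβ0 : β ≠ 0) (hnd : ∀ m : ℕ, 0 < m → (α / β) ^ m ≠ 1)
    (hle : ‖β‖ ≤ ‖α‖) (hα1 : 1 < ‖α‖) {p : ℕ} (hp : p.Prime)
    (hpΔ : (p : ℤ) ∣ a₁ ^ 2 + 4 * a₂) :
    ∃ J : ℕ, ∀ j : ℕ, J ≤ j →
      ∃ q : ℕ, q.Prime ∧ (q : ℤ) ∣ u (p ^ (j + 2)) ∧ ¬ (q : ℤ) ∣ u (p ^ j) := by
  obtain ⟨M, hM⟩ := pow_unbounded_of_one_lt (1 + 2 * (p : ℝ) ^ 2) hα1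
  refine ⟨max M 2, fun j hj => ?_⟩
  have hjM : M ≤ j := le_trans (le_max_left _ _) hj
  have hj2 : 2 ≤ j := le_trans (le_max_right _ _) hj
  by_contra! hno
  have hu0 : ∀ i, u (p ^ i) ≠ 0 := fun i => h.ne_zero hα hβ hβ0 hnd (pow_pos hp.pos _)
  have hsq : ∀ i, 2 ≤ i → ((p ^ 2 : ℕ) : ℤ) ∣ u (p ^ i) := fun i hi =>
    dvd_trans (by exact_mod_cast pow_dvd_pow p hi) (h.prime_pow_dvd hp hpΔ i)
  have hmono : ∀ {i k : ℕ}, i ≤ k → u (p ^ i) ∣ u (p ^ k) := fun hik =>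
    h.dvd_of_dvd (pow_dvd_pow p hik)
  have small : ∀ i, j ≤ i → i ≤ j + 1 →
      (u (p * p ^ i)).natAbs ≤ p * (u (p ^ i)).natAbs := by
    intro i hi1 hi2
    refine h.natAbs_le_of_no_new_prime hcop hp (pow_pos hp.pos _) (hsq i (by omega))
      (by rw [← pow_succ']; exact hu0 _) fun q hq hqd => ?_
    rw [← pow_succ'] at hqd
    exact (hno q hq (hqd.trans (hmono (by omega)))).trans (hmono hi1)
  have hsub : 0 < ‖α - β‖ := by
    rw [norm_pos_iff, sub_ne_zero]
    rintro rfl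
    exact hnd 1 one_pos (by simp [hβ0])
  have small' : ∀ i, j ≤ i → i ≤ j + 1 →
      ‖(α ^ p ^ i) ^ p - (β ^ p ^ i) ^ p‖ ≤ p * ‖α ^ p ^ i - β ^ p ^ i‖ := by
    intro i hi1 hi2
    rw [← pow_mul, ← pow_mul, mul_comm (p ^ i) p, ← h.binet hα hβ, ← h.binet hα hβ, norm_mul,
      norm_mul, ← mul_assoc]
    gcongr
    have hs : ((u (p * p ^ i)).natAbs : ℝ) ≤ p * (u (p ^ i)).natAbs := by
      exact_mod_cast small i hi1 hi2
    simpa [Complex.norm_intCast, Nat.cast_natAbs] using hs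
  have hpj : j < p ^ j := Nat.lt_pow_self hp.one_lt
  refine not_two_small_quotients (A := α ^ p ^ j) (B := β ^ p ^ j) hp.two_le ?_ ?_ ?_
    (small' j le_rfl (by omega)) ?_
  · rw [norm_pow, norm_pow]; gcongr
  · rw [norm_pow]
    exact hM.trans_le (pow_le_pow_right₀ hα1.le (by omega))
  · rw [← pow_mul, ← pow_mul, ← pow_succ, ← sub_ne_zero, ← h.binet hα hβ]
    exact mul_ne_zero (by exact_mod_cast hu0 _) (norm_pos_iff.1 hsub)
  · simpa only [pow_succ, pow_mul] using small' (j + 1) (by omega) le_rfl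

/-! ### Many integers `n` dividing `u n` -/

lemma IsLucas.pow_mul_mem {a₁ a₂ : ℤ} {u : ℕ → ℤ} (h : IsLucas a₁ a₂ u) {N n q : ℕ}
    (hNn : N ∣ n) (hn : 0 < n) (hnu : (n : ℤ) ∣ u n) (hq0 : q ≠ 0) (hq : (q : ℤ) ∣ u N) (e : ℕ) :
    ((n * q ^ e : ℕ) : ℤ) ∣ u (n * q ^ e) := by
  induction e with
  | zero => simpa using hnu
  | succ e ih =>
    rw [show n * q ^ (e + 1) = q * (n * q ^ e) by ring]
    exact h.mul_self_dvd (by positivity) ih hq0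
      (hq.trans (h.dvd_of_dvd (hNn.trans (dvd_mul_right _ _))))

lemma IsLucas.prod_pow_mem {a₁ a₂ : ℤ} {u : ℕ → ℤ} (h : IsLucas a₁ a₂ u) {N : ℕ} (hN : 0 < N)
    (hNu : (N : ℤ) ∣ u N) {ι : Type*} (s : Finset ι) {Q : ι → ℕ} (hQ0 : ∀ i, Q i ≠ 0)
    (hQ : ∀ i, (Q i : ℤ) ∣ u N) (e : ι → ℕ) :
    ((N * ∏ i ∈ s, Q i ^ e i : ℕ) : ℤ) ∣ u (N * ∏ i ∈ s, Q i ^ e i) := by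
  classical
  induction s using Finset.induction_on with
  | empty => simpa using hNu
  | insert i s hi ih =>
    rw [Finset.prod_insert hi, mul_comm (Q i ^ e i), ← mul_assoc]
    refine h.pow_mul_mem (dvd_mul_right _ _) ?_ ih (hQ0 i) (hQ i) _
    exact Nat.mul_pos hN (Finset.prod_pos fun i _ => pow_pos (Nat.pos_of_ne_zero (hQ0 i)) _)

/-- The integers counted are `p ^ (J + 2 K) * ∏ i < K, Q i ^ e i` with `e i < p ^ (2 (K - i))`; the
range of `e i` is chosen so that every factor `Q i ^ e i` obeys the same bound
`A ^ p ^ (J + 2 K + 2)`. -/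
lemma IsLucas.two_pow_le_countDiv {a₁ a₂ : ℤ} {u : ℕ → ℤ} (h : IsLucas a₁ a₂ u) {p J A : ℕ}
    (hp : p.Prime) (hpΔ : (p : ℤ) ∣ a₁ ^ 2 + 4 * a₂) (hA : 1 ≤ A) {Q : ℕ → ℕ}
    (hQ : ∀ i, (Q i).Prime) (hinj : Function.Injective Q)
    (hQu : ∀ i, (Q i : ℤ) ∣ u (p ^ (J + 2 * i + 2)))
    (hQA : ∀ i, Q i ≤ A ^ p ^ (J + 2 * i + 2)) (K : ℕ) {x : ℝ}
    (hx : ((p ^ (J + 2 * K) * A ^ (K * p ^ (J + 2 * K + 2)) : ℕ) : ℝ) ≤ x) :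
    2 ^ K ^ 2 ≤ countDiv u x := by
  classical
  have hNpos : 0 < p ^ (J + 2 * K) := pow_pos hp.pos _
  let F : (Fin K → ℕ) → ℕ := fun e => p ^ (J + 2 * K) * ∏ i : Fin K, Q i ^ e i
  have hF : Function.Injective F := fun e e' hee =>
    prod_pow_injective (fun i : Fin K => hQ i) (hinj.comp Fin.val_injective)
      (Nat.eq_of_mul_eq_mul_left hNpos hee)
  let E : Finset (Fin K → ℕ) :=
    Fintype.piFinset fun i : Fin K => Finset.range (p ^ (2 * (K - (i : ℕ))))
  have hE : E.card = p ^ (K * (K + 1)) := by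
    simp only [E, Fintype.card_piFinset, Finset.card_range]
    rw [Finset.prod_pow_eq_pow_sum, sum_two_mul_sub]
  calc 2 ^ K ^ 2 ≤ p ^ K ^ 2 := Nat.pow_le_pow_left hp.two_le _
    _ ≤ p ^ (K * (K + 1)) := Nat.pow_le_pow_right hp.pos (by nlinarith)
    _ = E.card := hE.symm
    _ = (E.image F).card := (Finset.card_image_of_injective _ hF).symm
    _ ≤ countDiv u x := by
      unfold countDiv
      refine Finset.card_le_card fun n hn => ?_
      obtain ⟨e, he, rfl⟩ := Finset.mem_image.1 hn
      rw [Finset.mem_filter, Finset.mem_Icc]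
      refine ⟨⟨?_, Nat.le_floor (le_trans (Nat.cast_le.2 ?_) hx)⟩, ?_⟩
      · exact Nat.mul_pos hNpos (Finset.prod_pos fun i _ => pow_pos (hQ i).pos _)
      · refine Nat.mul_le_mul_left _ ?_
        calc ∏ i : Fin K, Q i ^ e i ≤ ∏ _i : Fin K, A ^ p ^ (J + 2 * K + 2) := by
              refine Finset.prod_le_prod' fun i _ => ?_
              have hei : e i ≤ p ^ (2 * (K - (i : ℕ))) :=
                (Finset.mem_range.1 (Fintype.mem_piFinset.1 he i)).le
              calc Q i ^ e i ≤ (A ^ p ^ (J + 2 * (i : ℕ) + 2)) ^ e i :=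
                    Nat.pow_le_pow_left (hQA i) _
                _ ≤ (A ^ p ^ (J + 2 * (i : ℕ) + 2)) ^ p ^ (2 * (K - (i : ℕ))) :=
                    Nat.pow_le_pow_right (pow_pos hA _) hei
                _ = A ^ p ^ (J + 2 * K + 2) := by
                    have := i.2
                    rw [← pow_mul, ← pow_add]
                    congr 2
                    omega
          _ = A ^ (K * p ^ (J + 2 * K + 2)) := by
              rw [Finset.prod_const, Finset.card_univ, Fintype.card_fin, ← pow_mul, mul_comm]
      · refine h.prod_pow_mem (Q := fun i : Fin K => Q i) hNpos (h.prime_pow_dvd hp hpΔ _) _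
          (fun i => (hQ i).ne_zero)
          (fun i => (hQu i).trans (h.dvd_of_dvd (pow_dvd_pow p ?_))) e
        have := i.2
        omega

lemma size_bound {p J A : ℕ} (hp : 2 ≤ p) (hA : 1 ≤ A) (K : ℕ) :
    ((p ^ (J + 2 * K) * A ^ (K * p ^ (J + 2 * K + 2)) : ℕ) : ℝ) ≤
      Real.exp (((p : ℝ) ^ (J + 1) + A * (p : ℝ) ^ (J + 2)) * ((p : ℝ) ^ 3) ^ K) := by
  have hp1 : (1 : ℝ) ≤ p := by exact_mod_cast (by omega : 1 ≤ p)
  have hA1 : (1 : ℝ) ≤ A := by exact_mod_cast hA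
  have hp0 : (0 : ℝ) < p := by linarith
  have hA0 : (0 : ℝ) < A := by linarith
  push_cast
  rw [← Real.log_le_iff_le_exp (by positivity), Real.log_mul (by positivity) (by positivity),
    Real.log_pow, Real.log_pow]
  have hlp : Real.log p ≤ p := (Real.log_le_sub_one_of_pos hp0).trans (by linarith)
  have hlA : Real.log A ≤ A := (Real.log_le_sub_one_of_pos hA0).trans (by linarith)
  have hlp0 := Real.log_nonneg hp1
  have hlA0 := Real.log_nonneg hA1
  have hK : (K : ℝ) ≤ (p : ℝ) ^ K := by exact_mod_cast (Nat.lt_pow_self (by omega)).le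
  have hJK : ((J + 2 * K : ℕ) : ℝ) ≤ (p : ℝ) ^ (J + 2 * K) := by
    exact_mod_cast (Nat.lt_pow_self (by omega)).le
  calc ((J + 2 * K : ℕ) : ℝ) * Real.log p + ((K * p ^ (J + 2 * K + 2) : ℕ) : ℝ) * Real.log A
      ≤ (p : ℝ) ^ (J + 2 * K) * p + ((p : ℝ) ^ K * (p : ℝ) ^ (J + 2 * K + 2)) * A := by
        push_cast at hJK ⊢
        gcongr
    _ = (p : ℝ) ^ (J + 1 + 2 * K) + A * (p : ℝ) ^ (J + 2) * ((p : ℝ) ^ 3) ^ K := by ring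
    _ ≤ (p : ℝ) ^ (J + 1 + 3 * K) + A * (p : ℝ) ^ (J + 2) * ((p : ℝ) ^ 3) ^ K := by
        gcongr
        norm_num
    _ = _ := by ring

theorem statement5 (a₁ a₂ : ℤ) (u : ℕ → ℤ)
    (ha₂ : a₂ ≠ 0) (hcop : IsCoprime a₁ a₂)
    (hu0 : u 0 = 0) (hu1 : u 1 = 1)
    (hrec : ∀ n : ℕ, u (n + 2) = a₁ * u (n + 1) + a₂ * u n)
    (hΔ : a₁ ^ 2 + 4 * a₂ ≠ 0)
    (hΔ1 : a₁ ^ 2 + 4 * a₂ ≠ 1)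
    (hnd : ∀ α β : ℂ, α ^ 2 - (a₁ : ℂ) * α - (a₂ : ℂ) = 0 →
      β ^ 2 - (a₁ : ℂ) * β - (a₂ : ℂ) = 0 → α ≠ β →
      ∀ m : ℕ, 0 < m → (α / β) ^ m ≠ 1) :
    ∃ c₁ : ℝ, 0 < c₁ ∧ ∃ x₀ : ℝ, 0 < x₀ ∧ ∀ x : ℝ, x₀ < x →
      Real.exp (c₁ * Real.log (Real.log x) ^ 2) < (countDiv u x : ℝ) := by
  have h : IsLucas a₁ a₂ u := ⟨hu0, hu1, hrec⟩
  -- `a₁ ^ 2 + 4 * a₂ = -1` is impossible modulo `4`, so the discriminant has a prime factor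
  have hΔabs : (a₁ ^ 2 + 4 * a₂).natAbs ≠ 1 := by
    intro habs
    rcases Int.natAbs_eq_iff.1 habs with h1 | h1
    · exact hΔ1 (by simpa using h1)
    · push_cast at h1
      rcases Int.even_or_odd' a₁ with ⟨b, rfl | rfl⟩
      · ring_nf at h1; omega
      · ring_nf at h1; omega
  obtain ⟨p, hp, hpd⟩ := Nat.exists_prime_and_dvd hΔabs
  have hpΔ : (p : ℤ) ∣ a₁ ^ 2 + 4 * a₂ := Int.natCast_dvd.2 hpd
  obtain ⟨α, β, hα, hβ, hne, hβ0, hle, hα1⟩ := exists_roots ha₂ hΔ hnd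
  have hnd' := hnd α β hα hβ hne
  obtain ⟨J, hJ⟩ := h.exists_new_prime hcop hα hβ hβ0 hnd' hle hα1 hp hpΔ
  choose Q hQ hQu hQn using fun i : ℕ => hJ (J + 2 * i) (by omega)
  have hlt : ∀ {i k : ℕ}, i < k → Q i ≠ Q k := by
    intro i k hik heq
    apply hQn k
    rw [← heq]
    exact (hQu i).trans (h.dvd_of_dvd (pow_dvd_pow p (by omega)))
  have hinj : Function.Injective Q := by
    intro i k heq
    by_contra hik
    rcases lt_or_gt_of_ne hik with hik | hik
    · exact hlt hik heq
    · exact hlt hik heq.symm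
  set A := a₁.natAbs + a₂.natAbs + 1 with hAdef
  have hA : 1 ≤ A := by omega
  have hQA : ∀ i, Q i ≤ A ^ p ^ (J + 2 * i + 2) := fun i =>
    (Nat.le_of_dvd (Int.natAbs_pos.2 (h.ne_zero hα hβ hβ0 hnd' (pow_pos hp.pos _)))
      (Int.natCast_dvd.1 (hQu i))).trans (h.natAbs_le _)
  have hp1 : (1 : ℝ) < p := by exact_mod_cast hp.one_lt
  refine loglog_bound (C := (p : ℝ) ^ (J + 1) + A * (p : ℝ) ^ (J + 2)) (R := (p : ℝ) ^ 3) ?_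
    (one_lt_pow₀ hp1 (by norm_num)) fun K x hx =>
      h.two_pow_le_countDiv hp hpΔ hA hQ hinj hQu hQA K ((size_bound hp.two_le hA K).trans hx)
  have h1 : (1 : ℝ) ≤ (p : ℝ) ^ (J + 1) := one_le_pow₀ hp1.le
  have h2 : (0 : ℝ) ≤ A * (p : ℝ) ^ (J + 2) := by positivity
  linarith
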